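/- arXiv:math/0305352 — 3 statements merged into one kernel-verified Lean document; each statement's English description precedes it below -/
import Mathlib

section
/- The free product of two locally residually amenable groups is sofic. That is, if G and H are groups such that every finitely generated subgroup of G and every finitely generated subgroup of H is residually amenable, then the free product G ∗ H is sofic. -/
/-!
Finitely many elements of a locally residually amenable group survive in an amenable group, where
translations truncated to Følner sets are quasi-actions, so both factors are sofic. Hence each has
an almost multiplicative, almost free action by permutations of finite sets, `A` for `G` and `B` for
`H`. Take a homomorphism from the free group on `A × B` to a finite group `V` that kills no short
nontrivial word. Let `G` act on `A × B × V` through `A`, and `H` through `B` while multiplying the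
`V`-component by the quotient of the labels of the new and the old position in `A × B`. At almost
every starting point, an alternating word in `G` and `H` moves the position in each of its
nontrivial steps. The word in the labels by which it multiplies the `V`-component is then reduced,
short and not empty, so that component moves.
-/

/-- Two self-maps of a finite set `A` are `ε`-similar if the number of points where they
differ is at most `ε·|A|`. They are `(1-ε)`-different if they are not `(1-ε)`-similar. -/
def EpsSimilar {A : Type*} [Fintype A] (ε : ℝ) (e f : A → A) : Prop :=
  (Nat.card {a : A // e a ≠ f a} : ℝ) ≤ ε * Fintype.card A

/-- An `(F, ε)`-quasi-action of a group `G` on a finite set `A`: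
(a) `φ(ef)` is `ε`-similar to `φ(e)` followed by `φ(f)` for `e, f ∈ F`;
(b) `φ(1)` is `ε`-similar to the identity;
(c) for `1 ≠ e ∈ F`, `φ(e)` is `(1-ε)`-different from the identity. -/
def IsQuasiAction {G : Type*} [Group G] (F : Finset G) (ε : ℝ)
    {A : Type*} [Fintype A] (φ : G → A → A) : Prop :=
  (∀ e ∈ F, ∀ f ∈ F, EpsSimilar ε (φ (e * f)) (fun a => φ f (φ e a))) ∧
  EpsSimilar ε (φ 1) id ∧
  (∀ e ∈ F, e ≠ 1 → ¬ EpsSimilar (1 - ε) (φ e) id)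

/-- A group `G` is sofic if for every finite subset `F ⊆ G` and every `ε ∈ (0,1)` there is an
`(F, ε)`-quasi-action of `G` on some finite nonempty set. -/
def IsSofic (G : Type*) [Group G] : Prop :=
  ∀ (F : Finset G) (ε : ℝ), 0 < ε → ε < 1 →
    ∃ (A : Type) (_ : Fintype A) (_ : Nonempty A) (φ : G → A → A),
      IsQuasiAction F ε φ

/-- A group `M` satisfies the Følner condition (is amenable as a discrete group) if for every
finite `F ⊆ M` and every `ε > 0` there is a nonempty finite `A ⊆ M` with
`|A·g \ A| ≤ ε·|A|` for all `g ∈ F`. -/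
def FolnerCondition (M : Type*) [Group M] : Prop :=
  ∀ (F : Finset M) (ε : ℝ), 0 < ε →
    ∃ A : Finset M, A.Nonempty ∧
      ∀ g ∈ F, ((((fun a => a * g) '' (A : Set M)) \ (A : Set M)).ncard : ℝ) ≤ ε * A.card

/-- A group is residually amenable if every nontrivial element survives in a homomorphism
to some group satisfying the Følner condition. -/
def ResiduallyAmenable (G : Type*) [Group G] : Prop :=
  ∀ g : G, g ≠ 1 → ∃ (M : Type) (_ : Group M), FolnerCondition M ∧ ∃ φ : G →* M, φ g ≠ 1

/-! ### Locally residually amenable groups -/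

section EpsSimilar

variable {A : Type*} [Fintype A] {ε : ℝ}

theorem epsSimilar_iff_ncard_le {e f : A → A} :
    EpsSimilar ε e f ↔ ({a | e a ≠ f a}.ncard : ℝ) ≤ ε * Nat.card A := by
  rw [Nat.card_eq_fintype_card]
  rfl

theorem not_epsSimilar_one_sub_iff_ncard_lt {e f : A → A} :
    ¬ EpsSimilar (1 - ε) e f ↔ ({a | e a = f a}.ncard : ℝ) < ε * Nat.card A := by
  have hcard : ({a | e a = f a}.ncard : ℝ) + {a | e a ≠ f a}.ncard = Nat.card A :=
    mod_cast Set.ncard_add_ncard_compl {a | e a = f a}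
  rw [epsSimilar_iff_ncard_le, not_le]
  constructor <;> intro h <;> linarith

end EpsSimilar

theorem isSofic_of_locallyEmbeddable {G : Type*} [Group G]
    (h : ∀ F : Finset G, ∃ (M : Type*) (_ : Group M) (ψ : G → M), IsSofic M ∧ ψ 1 = 1 ∧
      (∀ e ∈ F, ∀ f ∈ F, ψ (e * f) = ψ e * ψ f) ∧ ∀ e ∈ F, e ≠ 1 → ψ e ≠ 1) :
    IsSofic G := by
  classical
  intro F ε hε hε'
  obtain ⟨M, _, ψ, hM, hψ_one, hψ_mul, hψ_ne⟩ := h F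
  obtain ⟨A, _, _, φ, hφ_mul, hφ_one, hφ_ne⟩ := hM (F.image ψ) ε hε hε'
  have hmem : ∀ e ∈ F, ψ e ∈ F.image ψ := fun _ => Finset.mem_image_of_mem ψ
  refine ⟨A, inferInstance, inferInstance, φ ∘ ψ, fun e he f hf => ?_, ?_, fun e he hne => ?_⟩
  · simpa only [Function.comp_apply, hψ_mul e he f hf]
      using hφ_mul _ (hmem e he) _ (hmem f hf)
  · simpa only [Function.comp_apply, hψ_one] using hφ_one
  · exact hφ_ne _ (hmem e he) (hψ_ne e he hne)

open Classical in
/-- Right translation by `g` on a finite subset `A` of a group, fixing the points that would leave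
`A`. -/
noncomputable def truncatedRightMul {M : Type*} [Group M] (A : Finset M) (g : M) (a : A) : A :=
  if h : (a : M) * g ∈ A then ⟨a * g, h⟩ else a

section TruncatedRightMul

variable {M : Type*} [Group M] {A : Finset M} {g h : M} {a : A}

theorem coe_truncatedRightMul (hag : (a : M) * g ∈ A) : (truncatedRightMul A g a : M) = a * g := by
  simp only [truncatedRightMul, dif_pos hag]

theorem truncatedRightMul_one : truncatedRightMul A 1 = id := funext fun a => Subtype.ext <| by
  rw [coe_truncatedRightMul (by rw [mul_one]; exact a.2), mul_one, id]

theorem truncatedRightMul_mul (hag : (a : M) * g ∈ A) (hagh : (a : M) * (g * h) ∈ A) :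
    truncatedRightMul A (g * h) a = truncatedRightMul A h (truncatedRightMul A g a) := by
  refine Subtype.ext ?_
  rw [coe_truncatedRightMul hagh, coe_truncatedRightMul, coe_truncatedRightMul hag, mul_assoc]
  rwa [coe_truncatedRightMul hag, mul_assoc]

theorem truncatedRightMul_ne (hg : g ≠ 1) (hag : (a : M) * g ∈ A) :
    truncatedRightMul A g a ≠ a := fun h =>
  hg (mul_eq_left.1 ((coe_truncatedRightMul hag).symm.trans (congrArg Subtype.val h)))

theorem ncard_mul_notMem_le (A : Finset M) (g : M) :
    {a : A | (a : M) * g ∉ A}.ncard ≤ (((fun a => a * g) '' (A : Set M)) \ (A : Set M)).ncard :=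
  Set.ncard_le_ncard_of_injOn (fun a : A => (a : M) * g) (fun a ha => ⟨⟨a, a.2, rfl⟩, ha⟩)
    (fun _ _ _ _ hab => Subtype.ext (mul_right_cancel hab)) (A.finite_toSet.image _).sdiff

end TruncatedRightMul

theorem FolnerCondition.exists_isQuasiAction {M : Type*} [Group M] (hM : FolnerCondition M)
    (F : Finset M) {ε : ℝ} (hε : 0 < ε) :
    ∃ A : Finset M, A.Nonempty ∧ IsQuasiAction F ε (truncatedRightMul A) := by
  classical
  let E : Finset M := F ∪ (F ×ˢ F).image fun p => p.1 * p.2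
  have hF : ∀ e ∈ F, e ∈ E := fun e => Finset.mem_union_left _
  have hFF : ∀ e ∈ F, ∀ f ∈ F, e * f ∈ E := fun e he f hf => Finset.mem_union_right _ <|
    Finset.mem_image_of_mem (fun p : M × M => p.1 * p.2) (Finset.mk_mem_product he hf)
  obtain ⟨A, hA, hAE⟩ := hM E (ε / 4) (by positivity)
  have hA_pos : (0 : ℝ) < Nat.card A := by simpa using hA.card_pos
  have hescape : ∀ g ∈ E, ({a : A | (a : M) * g ∉ A}.ncard : ℝ) ≤ ε / 4 * Nat.card A := by
    intro g hg
    rw [Nat.card_eq_fintype_card, Fintype.card_coe]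
    exact (Nat.cast_le.2 (ncard_mul_notMem_le A g)).trans (hAE g hg)
  refine ⟨A, hA, fun e he f hf => ?_, ?_, fun e he hne => ?_⟩
  · have hsub : {a : A | truncatedRightMul A (e * f) a ≠
          truncatedRightMul A f (truncatedRightMul A e a)} ⊆
        {a : A | (a : M) * e ∉ A} ∪ {a : A | (a : M) * (e * f) ∉ A} := fun a ha =>
      not_and_or.1 fun h => ha (truncatedRightMul_mul h.1 h.2)
    have hcard := (Set.ncard_le_ncard hsub).trans (Set.ncard_union_le _ _)
    rify at hcard
    rw [epsSimilar_iff_ncard_le]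
    nlinarith [hescape e (hF e he), hescape (e * f) (hFF e he f hf)]
  · simp only [epsSimilar_iff_ncard_le, truncatedRightMul_one, ne_eq, not_true_eq_false,
      Set.ofPred_false, Set.ncard_empty, Nat.cast_zero]
    positivity
  · have hsub : {a | truncatedRightMul A e a = id a} ⊆ {a : A | (a : M) * e ∉ A} :=
      fun a ha hae => truncatedRightMul_ne hne hae ha
    have hcard := Set.ncard_le_ncard hsub
    rify at hcard
    rw [not_epsSimilar_one_sub_iff_ncard_lt]
    nlinarith [hescape e (hF e he)]

theorem FolnerCondition.isSofic {M : Type} [Group M] (hM : FolnerCondition M) : IsSofic M :=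
  fun F _ hε _ =>
    let ⟨A, hA, hφ⟩ := hM.exists_isQuasiAction F hε
    ⟨A, inferInstance, hA.to_subtype, truncatedRightMul A, hφ⟩

theorem FolnerCondition.of_subsingleton (M : Type*) [Group M] [Subsingleton M] :
    FolnerCondition M := fun _ ε hε => by
  refine ⟨{1}, Finset.singleton_nonempty 1, fun g _ => ?_⟩
  simp only [Subsingleton.elim g 1, mul_one, Set.image_id', sdiff_self, Set.bot_eq_empty,
    Set.ncard_empty, Nat.cast_zero]
  positivity

theorem FolnerCondition.prod {M N : Type*} [Group M] [Group N] (hM : FolnerCondition M)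
    (hN : FolnerCondition N) : FolnerCondition (M × N) := by
  classical
  intro F ε hε
  obtain ⟨A, hA, hAF⟩ := hM (F.image Prod.fst) (ε / 2) (by positivity)
  obtain ⟨B, hB, hBF⟩ := hN (F.image Prod.snd) (ε / 2) (by positivity)
  refine ⟨A ×ˢ B, hA.product hB, fun g hg => ?_⟩
  have hAg := hAF g.1 (Finset.mem_image_of_mem _ hg)
  have hBg := hBF g.2 (Finset.mem_image_of_mem _ hg)
  set A' : Set M := (fun a => a * g.1) '' (A : Set M) with hA'
  set B' : Set N := (fun b => b * g.2) '' (B : Set N) with hB'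
  have hdiff : (fun p => p * g) '' ((A ×ˢ B : Finset (M × N)) : Set (M × N)) \
      ((A ×ˢ B : Finset (M × N)) : Set (M × N)) = A' ×ˢ (B' \ B) ∪ (A' \ A) ×ˢ B' := by
    rw [Finset.coe_product, ← Set.prod_sdiff_prod, hA', hB', ← Set.prodMap_image_prod]
    rfl
  have hA'_card : A'.ncard = A.card := by
    rw [hA', Set.ncard_image_of_injective _ (mul_left_injective g.1), Set.ncard_coe_finset]
  have hB'_card : B'.ncard = B.card := by
    rw [hB', Set.ncard_image_of_injective _ (mul_left_injective g.2), Set.ncard_coe_finset]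
  have hcard := Set.ncard_union_le (A' ×ˢ (B' \ B)) ((A' \ A) ×ˢ B')
  rw [← hdiff, Set.ncard_prod, Set.ncard_prod, hA'_card, hB'_card] at hcard
  calc _ ≤ (A.card * (B' \ B).ncard + (A' \ A).ncard * B.card : ℝ) := mod_cast hcard
    _ ≤ A.card * (ε / 2 * B.card) + ε / 2 * A.card * B.card := by gcongr
    _ = ε * (A ×ˢ B).card := by rw [Finset.card_product]; push_cast; ring

theorem ResiduallyAmenable.exists_hom_ne_one {G : Type*} [Group G] (hG : ResiduallyAmenable G)
    (F : Finset G) :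
    ∃ (M : Type) (_ : Group M) (φ : G →* M), FolnerCondition M ∧ ∀ g ∈ F, g ≠ 1 → φ g ≠ 1 := by
  classical
  induction F using Finset.induction_on with
  | empty => exact ⟨Unit, inferInstance, 1, .of_subsingleton Unit, by simp⟩
  | insert x F _ ih =>
    obtain ⟨M, _, φ, hM, hφ⟩ := ih
    by_cases hx : x = 1
    · refine ⟨M, _, φ, hM, fun g hg hg_ne => hφ g ?_ hg_ne⟩
      exact Finset.mem_of_mem_insert_of_ne hg (hx ▸ hg_ne)
    · obtain ⟨N, _, hN, ψ, hψx⟩ := hG x hx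
      refine ⟨M × N, inferInstance, φ.prod ψ, hM.prod hN, fun g hg hg_ne h => ?_⟩
      obtain ⟨hφg, hψg⟩ := Prod.mk_eq_one.1 h
      rcases Finset.mem_insert.1 hg with rfl | hg
      · exact hψx hψg
      · exact hφ g hg hg_ne hφg

theorem isSofic_of_locally_residuallyAmenable {G : Type*} [Group G]
    (hG : ∀ K : Subgroup G, K.FG → ResiduallyAmenable K) : IsSofic G := by
  classical
  refine isSofic_of_locallyEmbeddable fun F => ?_
  let K := Subgroup.closure (F : Set G)
  have hFK : ∀ e ∈ F, e ∈ K := fun e he => Subgroup.subset_closure he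
  obtain ⟨M, _, φ, hM, hφ⟩ :=
    (hG K ⟨F, rfl⟩).exists_hom_ne_one (F.preimage Subtype.val Subtype.val_injective.injOn)
  let ψ : G → M := fun g => if h : g ∈ K then φ ⟨g, h⟩ else 1
  have hψ : ∀ g : K, ψ g = φ g := fun g => by simp only [ψ, dif_pos g.2]
  refine ⟨M, _, ψ, hM.isSofic, ?_, fun e he f hf => ?_, fun e he hne => ?_⟩
  · rw [← K.coe_one, hψ, map_one]
  · lift e to K using hFK e he
    lift f to K using hFK f hf
    rw [← K.coe_mul, hψ, hψ, hψ, map_mul]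
  · lift e to K using hFK e he
    rw [hψ]
    exact hφ e (Finset.mem_preimage.2 he) (mod_cast hne)

/-! ### Sofic approximations -/

theorem exists_perm_eqOn {X : Type*} [Finite X] {f : X → X} {s : Set X} (hf : s.InjOn f) :
    ∃ σ : Equiv.Perm X, s.EqOn σ f := by
  obtain ⟨σ, hσ⟩ := Equiv.Perm.exists_extending_pair (Subtype.val : s → X) (s.domRestrict f)
    Subtype.val_injective hf.injective
  exact ⟨σ, fun x hx => hσ ⟨x, hx⟩⟩

section AlmostAll

open Filter Topology

variable {I : Type*} {l : Filter I} {X : I → Type*} [∀ i, Finite (X i)]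

/-- The filter on the disjoint union of the finite sets `X i` whose members contain a proportion of
`X i` tending to `1` along `l`. An eventuality along it is a property of asymptotically almost all
points. -/
@[irreducible]
def almostAll (l : Filter I) (X : I → Type*) [∀ i, Finite (X i)] : Filter (Σ i, X i) :=
  comk (fun S => ∀ ε > 0, ∀ᶠ i in l, ((Sigma.mk i ⁻¹' S).ncard : ℝ) ≤ ε * Nat.card (X i))
    (fun ε hε => .of_forall fun i => by
      simp only [Set.preimage_empty, Set.ncard_empty, Nat.cast_zero]
      positivity)
    (fun T hT S hST ε hε => (hT ε hε).mono fun i hi =>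
      (Nat.cast_le.2 (Set.ncard_le_ncard (Set.preimage_mono hST))).trans hi)
    (fun S hS T hT ε hε => by
      filter_upwards [hS (ε / 2) (half_pos hε), hT (ε / 2) (half_pos hε)] with i hSi hTi
      have hcard := Set.ncard_union_le (Sigma.mk i ⁻¹' S) (Sigma.mk i ⁻¹' T)
      rw [← Set.preimage_union] at hcard
      rify at hcard
      linarith)

theorem eventually_almostAll {p : (Σ i, X i) → Prop} :
    (∀ᶠ x in almostAll l X, p x) ↔
      ∀ ε > 0, ∀ᶠ i in l, ({a | ¬ p ⟨i, a⟩}.ncard : ℝ) ≤ ε * Nat.card (X i) := by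
  rw [almostAll]
  rfl

theorem eventually_almostAll_of_le {p : (Σ i, X i) → Prop} {δ : I → ℝ} (hδ : Tendsto δ l (𝓝 0))
    (hp : ∀ᶠ i in l, ({a | ¬ p ⟨i, a⟩}.ncard : ℝ) ≤ δ i * Nat.card (X i)) :
    ∀ᶠ x in almostAll l X, p x :=
  eventually_almostAll.2 fun ε hε => by
    filter_upwards [hp, hδ.eventually_le_const hε] with i hi hδi
    exact hi.trans (by gcongr)

theorem tendsto_fst_almostAll : Tendsto Sigma.fst (almostAll l X) l := fun s hs =>
  eventually_almostAll.2 fun ε hε => by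
    filter_upwards [hs] with i hi
    simp only [hi, not_true_eq_false, Set.ofPred_false, Set.ncard_empty, Nat.cast_zero]
    positivity

theorem tendsto_almostAll {J : Type*} {m : Filter J} {Y : J → Type*} [∀ j, Finite (Y j)]
    {f : J → I} {q : ∀ j, Y j → X (f j)} (hf : Tendsto f m l)
    (hq : ∀ j, ∃ k, ∀ S : Set (X (f j)), (q j ⁻¹' S).ncard = k * S.ncard) :
    Tendsto (Sigma.map f q) (almostAll m Y) (almostAll l X) := by
  refine fun T hT => eventually_almostAll.2 fun ε hε => ?_
  filter_upwards [hf.eventually (eventually_almostAll.1 hT ε hε)] with j hj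
  obtain ⟨k, hk⟩ := hq j
  have hcard : Nat.card (Y j) = k * Nat.card (X (f j)) := by
    rw [← Set.ncard_univ, ← Set.ncard_univ, ← hk, Set.preimage_univ]
  calc (({y | ⟨j, y⟩ ∉ Sigma.map f q ⁻¹' T}.ncard : ℕ) : ℝ)
      = k * {x | ⟨f j, x⟩ ∉ T}.ncard := mod_cast hk {x | ⟨f j, x⟩ ∉ T}
    _ ≤ k * (ε * Nat.card (X (f j))) := by gcongr; exact hj
    _ = ε * Nat.card (Y j) := by rw [hcard]; push_cast; ring

theorem tendsto_almostAll_perm (σ : ∀ i, Equiv.Perm (X i)) :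
    Tendsto (Sigma.map id fun i => σ i) (almostAll l X) (almostAll l X) :=
  tendsto_almostAll tendsto_id fun i => ⟨1, fun S => by
    rw [one_mul, Set.ncard_preimage_of_injective_subset_range (σ i).injective
      ((σ i).surjective.range_eq ▸ Set.subset_univ S)]⟩

theorem tendsto_almostAll_reindex {J : Type*} {m : Filter J} {f : J → I} (hf : Tendsto f m l) :
    Tendsto (Sigma.map f fun _ => id) (almostAll m fun j => X (f j)) (almostAll l X) :=
  tendsto_almostAll hf fun _ => ⟨1, fun S => (one_mul S.ncard).symm⟩

theorem tendsto_almostAll_prod_fst {Y : I → Type*} [∀ i, Finite (Y i)] :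
    Tendsto (Sigma.map id fun _ => Prod.fst) (almostAll l fun i => X i × Y i) (almostAll l X) :=
  tendsto_almostAll tendsto_id fun i => ⟨Nat.card (Y i), fun S => by
    rw [← Set.prod_univ, Set.ncard_prod, Set.ncard_univ, mul_comm]⟩

theorem tendsto_almostAll_prod_snd {Y : I → Type*} [∀ i, Finite (Y i)] :
    Tendsto (Sigma.map id fun _ => Prod.snd) (almostAll l fun i => X i × Y i) (almostAll l Y) :=
  tendsto_almostAll tendsto_id fun i => ⟨Nat.card (X i), fun S => by
    rw [← Set.univ_prod, Set.ncard_prod, Set.ncard_univ]⟩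

theorem exists_perm_eventually_eq {f g : ∀ i, X i → X i}
    (hgf : ∀ᶠ x in almostAll l X, g x.1 (f x.1 x.2) = x.2) :
    ∃ σ : ∀ i, Equiv.Perm (X i), ∀ᶠ x in almostAll l X, σ x.1 x.2 = f x.1 x.2 := by
  have hinj : ∀ i, {a | g i (f i a) = a}.InjOn (f i) := fun i a ha b hb hab => by
    rw [← ha, ← hb, hab]
  choose σ hσ using fun i => exists_perm_eqOn (hinj i)
  exact ⟨σ, hgf.mono fun x hx => hσ x.1 hx⟩

/-- The congruence on families of permutations of the finite sets `X i` that identifies two families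
agreeing at asymptotically almost all points, i.e. whose normalized Hamming distance tends to `0`.
-/
def hammingCon (l : Filter I) (X : I → Type*) [∀ i, Finite (X i)] :
    Con (∀ i, Equiv.Perm (X i)) where
  r σ τ := ∀ᶠ x in almostAll l X, σ x.1 x.2 = τ x.1 x.2
  iseqv := ⟨fun _ => .of_forall fun _ => rfl, fun h => h.mono fun _ => Eq.symm,
    fun h h' => h.mp (h'.mono fun _ hx hx' => hx'.trans hx)⟩
  mul' {σ σ' τ τ'} hσ hτ := by
    filter_upwards [hτ, (tendsto_almostAll_perm τ).eventually hσ] with x hτx hσx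
    exact hσx.trans (congrArg (σ' x.1) hτx)

theorem hammingCon_iff {σ τ : ∀ i, Equiv.Perm (X i)} :
    hammingCon l X σ τ ↔ ∀ᶠ x in almostAll l X, σ x.1 x.2 = τ x.1 x.2 :=
  Iff.rfl

/-- A sofic approximation of `G` along the filter `l`: for each `g`, permutations `α g i` of the
finite sets `X i` which are multiplicative in `g` at asymptotically almost all points and, for
`g ≠ 1`, move asymptotically almost all points. -/
structure IsSoficApprox {G : Type*} [Group G] (l : Filter I) (α : G → ∀ i, Equiv.Perm (X i)) :
    Prop where
  hammingCon_mul (g h : G) : hammingCon l X (α (g * h)) (α g * α h)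
  eventually_ne (g : G) : g ≠ 1 → ∀ᶠ x in almostAll l X, α g x.1 x.2 ≠ x.2

theorem IsSoficApprox.reindex {G J : Type*} [Group G] {α : G → ∀ i, Equiv.Perm (X i)}
    {m : Filter J} {f : J → I} (hα : IsSoficApprox l α) (hf : Tendsto f m l) :
    IsSoficApprox (X := fun j => X (f j)) m fun g j => α g (f j) where
  hammingCon_mul g h :=
    (tendsto_almostAll_reindex hf).eventually (hammingCon_iff.1 (hα.hammingCon_mul g h))
  eventually_ne g hg := (tendsto_almostAll_reindex hf).eventually (hα.eventually_ne g hg)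

theorem IsSofic.exists_eventually_quasiAction.{u} {G : Type u} [Group G] (hG : IsSofic G) :
    ∃ (I : Type u) (l : Filter I) (_ : l.NeBot) (X : I → Type) (_ : ∀ i, Finite (X i))
      (_ : ∀ i, Nonempty (X i)) (φ : G → ∀ i, X i → X i),
      (∀ g h, ∀ᶠ x in almostAll l X, φ (g * h) x.1 x.2 = φ h x.1 (φ g x.1 x.2)) ∧
      (∀ᶠ x in almostAll l X, φ 1 x.1 x.2 = x.2) ∧
      ∀ g, g ≠ 1 → ∀ᶠ x in almostAll l X, φ g x.1 x.2 ≠ x.2 := by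
  let l : Filter (Finset G × ℕ) := atTop ×ˢ atTop
  let δ : Finset G × ℕ → ℝ := fun i => 1 / ((i.2 + 1 : ℕ) + 1)
  have hδ_lt (i : Finset G × ℕ) : δ i < 1 := (div_lt_one (by positivity)).2 <| by
    rw [lt_add_iff_pos_left]
    positivity
  have hδ : Tendsto δ l (𝓝 0) :=
    (tendsto_one_div_add_atTop_nhds_zero_nat.comp (tendsto_add_atTop_nat 1)).comp tendsto_snd
  have hmem (g : G) : ∀ᶠ i in l, g ∈ i.1 := tendsto_fst.eventually <|
    (eventually_ge_atTop {g}).mono fun _ => Finset.singleton_subset_iff.1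
  choose X _ hX φ hφ using fun i : Finset G × ℕ => hG i.1 (δ i) Nat.one_div_pos_of_nat (hδ_lt i)
  refine ⟨_, l, inferInstance, X, inferInstance, hX, fun g i => φ i g, fun g h => ?_, ?_,
    fun g hg => ?_⟩ <;> refine eventually_almostAll_of_le hδ ?_
  · filter_upwards [hmem g, hmem h] with i hgi hhi
    exact epsSimilar_iff_ncard_le.1 ((hφ i).1 g hgi h hhi)
  · exact .of_forall fun i => epsSimilar_iff_ncard_le.1 (hφ i).2.1
  · filter_upwards [hmem g] with i hgi
    simp only [not_not]
    exact (not_epsSimilar_one_sub_iff_ncard_lt.1 ((hφ i).2.2 g hgi hg)).le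

theorem IsSofic.exists_isSoficApprox.{u} {G : Type u} [Group G] (hG : IsSofic G) :
    ∃ (I : Type u) (l : Filter I) (_ : l.NeBot) (X : I → Type) (_ : ∀ i, Finite (X i))
      (_ : ∀ i, Nonempty (X i)) (α : G → ∀ i, Equiv.Perm (X i)), IsSoficApprox l α := by
  obtain ⟨I, l, hl, X, hX, hX', φ, hφ_mul, hφ_one, hφ_ne⟩ := hG.exists_eventually_quasiAction
  have hφ_inv (g : G) : ∀ᶠ x in almostAll l X, φ g x.1 (φ g⁻¹ x.1 x.2) = x.2 := by
    filter_upwards [hφ_mul g⁻¹ g, hφ_one] with x hmul hone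
    rw [← hmul, inv_mul_cancel, hone]
  -- A quasi-action is a right action, a sofic approximation a left one.
  choose α hα using fun g : G => exists_perm_eventually_eq (f := φ g⁻¹) (hφ_inv g)
  refine ⟨I, l, hl, X, hX, hX', α, fun g h => hammingCon_iff.2 ?_, fun g hg => ?_⟩
  · filter_upwards [hα (g * h), hα h, (tendsto_almostAll_perm (α h)).eventually (hα g),
      hφ_mul h⁻¹ g⁻¹] with x hgh hh hg hmul
    calc α (g * h) x.1 x.2 = φ g⁻¹ x.1 (φ h⁻¹ x.1 x.2) := by rw [hgh, mul_inv_rev, hmul]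
      _ = α g x.1 (α h x.1 x.2) := by rw [← hh]; exact hg.symm
  · filter_upwards [hα g, hφ_ne g⁻¹ (inv_ne_one.2 hg)] with x hx hne
    rwa [hx]

theorem isSofic_of_hom_hammingCon_quotient {Γ : Type*} [Group Γ] [l.NeBot] {X : I → Type}
    [∀ i, Finite (X i)] [∀ i, Nonempty (X i)] (Φ : Γ →* (hammingCon l X).Quotient)
    (hΦ : ∀ w, w ≠ 1 → ∃ σ : ∀ i, Equiv.Perm (X i), σ = Φ w ∧
      ∀ᶠ x in almostAll l X, σ x.1 x.2 ≠ x.2) :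
    IsSofic Γ := by
  classical
  intro F ε hε _
  have hlift (w : Γ) : ∃ σ : ∀ i, Equiv.Perm (X i), σ = Φ w⁻¹ ∧
      (w ≠ 1 → ∀ᶠ x in almostAll l X, σ x.1 x.2 ≠ x.2) := by
    rcases eq_or_ne w 1 with rfl | hw
    · exact ⟨1, by rw [inv_one, map_one, Con.coe_one], fun h => absurd rfl h⟩
    · exact (hΦ w⁻¹ (inv_ne_one.2 hw)).imp fun σ hσ => ⟨hσ.1, fun _ => hσ.2⟩
  choose σ hσ hσ_ne using hlift
  have hσ_mul (e f : Γ) : hammingCon l X (σ (e * f)) (σ f * σ e) :=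
    (Con.eq _).1 (by rw [Con.coe_mul, hσ, hσ, hσ, mul_inv_rev, map_mul])
  have hσ_one : hammingCon l X (σ 1) 1 :=
    (Con.eq _).1 (by rw [hσ, inv_one, map_one, Con.coe_one])
  have hmul : ∀ᶠ i in l, ∀ e ∈ F, ∀ f ∈ F,
      ({a | ¬ σ (e * f) i a = σ f i (σ e i a)}.ncard : ℝ) ≤ ε * Nat.card (X i) :=
    (eventually_all_finset F).2 fun e _ => (eventually_all_finset F).2 fun f _ =>
      eventually_almostAll.1 (hσ_mul e f) ε hε
  have hone : ∀ᶠ i in l, ({a | ¬ σ 1 i a = a}.ncard : ℝ) ≤ ε * Nat.card (X i) :=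
    eventually_almostAll.1 hσ_one ε hε
  have hne : ∀ᶠ i in l, ∀ e ∈ F, e ≠ 1 → ({a | σ e i a = a}.ncard : ℝ) ≤ ε / 2 * Nat.card (X i) :=
    (eventually_all_finset F).2 fun e _ => eventually_imp_distrib_left.2 fun he => by
      simpa only [not_not] using eventually_almostAll.1 (hσ_ne e he) (ε / 2) (half_pos hε)
  obtain ⟨i, hi_mul, hi_one, hi_ne⟩ := (hmul.and (hone.and hne)).exists
  let _ := Fintype.ofFinite (X i)
  refine ⟨X i, inferInstance, inferInstance, fun w => σ w i, fun e he f hf => ?_, ?_,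
    fun e he he' => ?_⟩
  · exact epsSimilar_iff_ncard_le.2 (hi_mul e he f hf)
  · exact epsSimilar_iff_ncard_le.2 hi_one
  · have hcard : (0 : ℝ) < Nat.card (X i) := mod_cast Nat.card_pos
    exact not_epsSimilar_one_sub_iff_ncard_lt.2 <| (hi_ne e he he').trans_lt <| by
      gcongr
      exact half_lt_self hε

end AlmostAll

/-! ### Words in free groups and free products -/

theorem exists_perm_coe_eq_mul {G : Type*} [Group G] (S : Set G) [Finite S] (g : G) :
    ∃ σ : Equiv.Perm S, ∀ w : S, g * w ∈ S → (σ w : G) = g * w := by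
  let S' := {w : S // g * w ∈ S}
  have hinj : Function.Injective fun w : S' => (⟨g * w.1, w.2⟩ : S) := fun w w' h =>
    Subtype.ext (Subtype.ext (mul_left_cancel (congrArg Subtype.val h)))
  obtain ⟨σ, hσ⟩ := Equiv.Perm.exists_extending_pair _ _ (Subtype.val_injective (p := _)) hinj
  exact ⟨σ, fun w hw => congrArg Subtype.val (hσ ⟨w, hw⟩)⟩

section FreeGroup

open FreeGroup (mk of lift mul_mk norm_one norm_mk_le toWord_injective lift_apply_of)

theorem finite_setOf_norm_le (X : Type*) [DecidableEq X] [Finite X] (n : ℕ) :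
    {w : FreeGroup X | w.norm ≤ n}.Finite :=
  (List.finite_length_le (X × Bool) n).preimage toWord_injective.injOn

theorem exists_finite_hom_ne_one_of_norm_le.{u} (X : Type u) [DecidableEq X] [Finite X] (n : ℕ) :
    ∃ (V : Type u) (_ : Group V) (_ : Finite V) (θ : FreeGroup X →* V),
      ∀ w, w ≠ 1 → w.norm ≤ n → θ w ≠ 1 := by
  let B : Set (FreeGroup X) := {w | w.norm ≤ n}
  have : Finite B := finite_setOf_norm_le X n
  have one_mem : 1 ∈ B := norm_one.trans_le n.zero_le
  choose σ hσ using fun x : X => exists_perm_coe_eq_mul B (of x)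
  let θ : FreeGroup X →* Equiv.Perm B := lift σ
  have hletter (y : X × Bool) (w : B) (hw : mk [y] * w.1 ∈ B) :
      (θ (mk [y]) w : FreeGroup X) = mk [y] * w := by
    obtain ⟨x, _ | _⟩ := y
    · have hcancel : of x * (mk [(x, false)] * w.1) = w.1 := mul_inv_cancel_left (of x) w.1
      have hσw : σ x ⟨mk [(x, false)] * w, hw⟩ = w :=
        Subtype.ext ((hσ x _ (by rw [hcancel]; exact w.2)).trans hcancel)
      have hθ : θ (mk [(x, false)]) = (σ x)⁻¹ := by simp [θ]
      rw [hθ, Equiv.Perm.inv_eq_iff_eq.2 hσw.symm]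
    · have hθ : θ (mk [(x, true)]) = σ x := lift_apply_of
      rw [hθ]
      exact hσ x w hw
  have hword (L : List (X × Bool)) (hL : L.length ≤ n) :
      (θ (mk L) ⟨1, one_mem⟩ : FreeGroup X) = mk L := by
    induction L with
    | nil => rfl
    | cons y L ih =>
      have hmul : mk (y :: L) = mk [y] * mk L := (mul_mk (L₁ := [y])).symm
      rw [hmul, map_mul, Equiv.Perm.mul_apply, hletter, ih ((Nat.le_succ _).trans hL)]
      rw [ih ((Nat.le_succ _).trans hL), ← hmul]
      exact norm_mk_le.trans hL
  refine ⟨Equiv.Perm B, inferInstance, inferInstance, θ, fun w hw hwn hθ => hw ?_⟩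
  rw [← w.mk_toWord, ← hword w.toWord hwn, w.mk_toWord, hθ, Equiv.Perm.one_apply]

end FreeGroup

-- A relation that ignores its second argument constrains every entry of a chain but the last.
theorem exists_eq_inl_mul_prod_alternating {G H : Type*} [Group G] [Group H]
    (w : Monoid.Coprod G H) :
    ∃ (g₀ : G) (L : List (H × G)),
      w = .inl g₀ * (L.map fun p => .inr p.1 * .inl p.2).prod ∧
      (∀ p ∈ L, p.1 ≠ 1) ∧ L.IsChain fun p _ => p.2 ≠ 1 := by
  induction w using Monoid.Coprod.induction_on' with
  | one => exact ⟨1, [], by simp⟩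
  | inl_mul g w ih =>
    obtain ⟨g₀, L, rfl, hL⟩ := ih
    exact ⟨g * g₀, L, by rw [map_mul, mul_assoc], hL⟩
  | inr_mul h w ih =>
    obtain ⟨g₀, L, rfl, hL, hL'⟩ := ih
    by_cases hh : h = 1
    · exact ⟨g₀, L, by rw [hh, map_one, one_mul], hL, hL'⟩
    by_cases hg : ∀ q ∈ L.head?, g₀ ≠ 1
    · exact ⟨1, (h, g₀) :: L, by simp [mul_assoc], List.forall_mem_cons.2 ⟨hh, hL⟩,
        List.isChain_cons.2 ⟨hg, hL'⟩⟩
    push Not at hg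
    obtain ⟨⟨h', g⟩, hq, rfl⟩ := hg
    obtain ⟨L, rfl⟩ := List.head?_eq_some_iff.1 hq
    obtain ⟨hh', hL⟩ := List.forall_mem_cons.1 hL
    by_cases hhh : h * h' = 1
    · refine ⟨g, L, ?_, hL, hL'.tail⟩
      simp [← mul_assoc, ← map_mul, hhh]
    · refine ⟨1, (h * h', g) :: L, ?_, List.forall_mem_cons.2 ⟨hhh, hL⟩, ?_⟩
      · simp [mul_assoc]
      · rw [List.isChain_cons] at hL' ⊢
        exact hL'

/-! ### The action of the free product -/

section ProductAction

variable {A B C V : Type*} [Group V]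

/-- The action of the permutations of `A` on the first factor of `A × C`. -/
def leftAction (A C : Type*) : Equiv.Perm A →* Equiv.Perm (A × C) :=
  MonoidHom.mk' (fun σ => σ.prodCongr (Equiv.refl C)) fun _ _ => rfl

/-- The action of the permutations of `B` on `A × B × V` that covers the action on the second factor
and whose `V`-component is translated by the coboundary of the labelling `t`. -/
def twistedAction (t : A × B → V) : Equiv.Perm B →* Equiv.Perm (A × B × V) :=
  MonoidHom.mk'
    (fun τ =>
      { toFun := fun z => (z.1, τ z.2.1, t (z.1, τ z.2.1) * (t (z.1, z.2.1))⁻¹ * z.2.2)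
        invFun := fun z => (z.1, τ⁻¹ z.2.1, t (z.1, τ⁻¹ z.2.1) * (t (z.1, z.2.1))⁻¹ * z.2.2)
        left_inv := fun z => by simp [mul_assoc]
        right_inv := fun z => by simp [mul_assoc] })
    fun σ τ => by ext z <;> simp [mul_assoc]

theorem leftAction_apply (σ : Equiv.Perm A) (z : A × C) : leftAction A C σ z = (σ z.1, z.2) :=
  rfl

theorem twistedAction_apply (t : A × B → V) (τ : Equiv.Perm B) (z : A × B × V) :
    twistedAction t τ z =
      (z.1, τ z.2.1, t (z.1, τ z.2.1) * (t (z.1, z.2.1))⁻¹ * z.2.2) :=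
  rfl

theorem leftAction_apply_eq_iff {σ σ' : Equiv.Perm A} {z : A × C} :
    leftAction A C σ z = leftAction A C σ' z ↔ σ z.1 = σ' z.1 := by
  simp only [leftAction_apply, Prod.mk.injEq, and_true]

theorem twistedAction_apply_eq_iff {t : A × B → V} {τ τ' : Equiv.Perm B} {z : A × B × V} :
    twistedAction t τ z = twistedAction t τ' z ↔ τ z.2.1 = τ' z.2.1 := by
  refine ⟨fun h => congrArg (fun y : A × B × V => y.2.1) h, fun h => ?_⟩
  rw [twistedAction_apply, twistedAction_apply, h]

end ProductAction

/-- The permutations of the sets `A i × B i × V i` by which a syllable `inr h * inl g` of a word in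
the free product acts: `g` acts on `A i` through `α`, and then `h` acts on `B i` through `β`,
twisted by the values of `θ i` on the generators. -/
def syllableAction {I G H : Type*} {A B V : I → Type*} [∀ i, Group (V i)]
    (α : G → ∀ i, Equiv.Perm (A i)) (β : H → ∀ i, Equiv.Perm (B i))
    (θ : ∀ i, FreeGroup (A i × B i) →* V i) (q : H × G) (i : I) : Equiv.Perm (A i × B i × V i) :=
  twistedAction (θ i ∘ .of) (β q.1 i) * leftAction (A i) (B i × V i) (α q.2 i)

section Trace

open FreeGroup (of IsReduced isReduced_cons_cons one_eq_mk)

variable {A B V : Type*} [Group V]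

/-- The point `z` of `A × B × V` is the endpoint of a walk through `A × B` that is recorded by the
reduced word `p`: the `V`-component has been translated from `v` by the value of `p` under `θ`, and
the last letter written, at the head of `p`, is the generator of the current position in `A × B`. -/
structure IsTrace (θ : FreeGroup (A × B) →* V) (v : V) (p : List ((A × B) × Bool))
    (z : A × B × V) : Prop where
  isReduced : IsReduced p
  snd_snd_eq : z.2.2 = θ (.mk p) * v
  eq_of_mem_head? : ∀ y ∈ p.head?, y = ((z.1, z.2.1), true)

theorem isTrace_nil (θ : FreeGroup (A × B) →* V) (z : A × B × V) : IsTrace θ z.2.2 [] z where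
  isReduced := .nil
  snd_snd_eq := by rw [← one_eq_mk, map_one, one_mul]
  eq_of_mem_head? := by simp

theorem IsTrace.cons_cons {θ : FreeGroup (A × B) →* V} {v : V} {p : List ((A × B) × Bool)}
    {z : A × B × V} (hp : IsTrace θ v p z) {σ : Equiv.Perm A} {τ : Equiv.Perm B}
    (hσ : p ≠ [] → σ z.1 ≠ z.1) (hτ : τ z.2.1 ≠ z.2.1) :
    IsTrace θ v (((σ z.1, τ z.2.1), true) :: ((σ z.1, z.2.1), false) :: p)
      (twistedAction (θ ∘ of) τ (leftAction A (B × V) σ z)) where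
  isReduced := by
    refine isReduced_cons_cons.2 ⟨fun h => absurd (congrArg Prod.snd h) hτ, ?_⟩
    refine List.isChain_cons.2 ⟨fun y hy h => ?_, hp.isReduced⟩
    rw [hp.eq_of_mem_head? y hy] at h
    exact absurd (congrArg Prod.fst h) (hσ (by rintro rfl; simp at hy))
  snd_snd_eq := by
    have hmk (b c : B) : FreeGroup.mk (((σ z.1, b), true) :: ((σ z.1, c), false) :: p) =
        of (σ z.1, b) * (of (σ z.1, c))⁻¹ * .mk p := rfl
    simp only [hmk, twistedAction_apply, leftAction_apply, hp.snd_snd_eq, Function.comp_apply,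
      map_mul, map_inv, mul_assoc]
  eq_of_mem_head? := by simp [twistedAction_apply, leftAction_apply]

end Trace

section Coprod

open Filter

variable {I : Type*} {l : Filter I} {G H : Type*} [Group G] [Group H]
  {A B : I → Type*} [∀ i, Finite (A i)] [∀ i, Finite (B i)]

theorem IsSoficApprox.comp {α : G → ∀ i, Equiv.Perm (A i)} (hα : IsSoficApprox l α)
    {T : ∀ i, Equiv.Perm (A i) →* Equiv.Perm (B i)} {π : ∀ i, B i → A i}
    (hπ : Tendsto (Sigma.map id π) (almostAll l B) (almostAll l A))
    (hT : ∀ i σ τ b, T i σ b = T i τ b ↔ σ (π i b) = τ (π i b)) :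
    IsSoficApprox l fun g i => T i (α g i) where
  hammingCon_mul g h := hammingCon_iff.2 <| by
    filter_upwards [hπ.eventually (hammingCon_iff.1 (hα.hammingCon_mul g h))] with x hx
    rw [Pi.mul_apply, ← map_mul]
    exact (hT ..).2 hx
  eventually_ne g hg := by
    filter_upwards [hπ.eventually (hα.eventually_ne g hg)] with x hx hTx
    refine hx ((hT x.1 (α g x.1) 1 x.2).1 ?_)
    rw [hTx, map_one, Equiv.Perm.one_apply]

/-- A sofic approximation as a homomorphism to the families of permutations modulo `hammingCon`. -/
def IsSoficApprox.toHom {α : G → ∀ i, Equiv.Perm (A i)} (hα : IsSoficApprox l α) :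
    G →* (hammingCon l A).Quotient :=
  MonoidHom.mk' (fun g => α g) fun g h => (Con.eq _).2 (hα.hammingCon_mul g h)

variable {V : I → Type*} [∀ i, Finite (V i)]
  {α : G → ∀ i, Equiv.Perm (A i)} {β : H → ∀ i, Equiv.Perm (B i)}

theorem IsSoficApprox.comp_leftAction (hα : IsSoficApprox l α) :
    IsSoficApprox l fun g i => leftAction (A i) (B i × V i) (α g i) :=
  hα.comp (π := fun _ => Prod.fst) tendsto_almostAll_prod_fst
    fun _ _ _ _ => leftAction_apply_eq_iff

variable [∀ i, Group (V i)]

theorem IsSoficApprox.comp_twistedAction (hβ : IsSoficApprox l β) (t : ∀ i, A i × B i → V i) :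
    IsSoficApprox l fun h i => twistedAction (t i) (β h i) :=
  hβ.comp (π := fun _ z => z.2.1) (tendsto_almostAll_prod_fst.comp tendsto_almostAll_prod_snd)
    fun _ _ _ _ => twistedAction_apply_eq_iff

theorem eventually_exists_isTrace (hα : IsSoficApprox l α) (hβ : IsSoficApprox l β)
    (θ : ∀ i, FreeGroup (A i × B i) →* V i) (L : List (H × G)) (hL : ∀ q ∈ L, q.1 ≠ 1)
    (hL' : L.IsChain fun q _ => q.2 ≠ 1) :
    ∀ᶠ x in almostAll l fun i => A i × B i × V i, ∃ p, p.length = 2 * L.length ∧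
      IsTrace (θ x.1) x.2.2.2 p ((L.map (syllableAction α β θ)).prod x.1 x.2) := by
  induction L with
  | nil => exact .of_forall fun x => ⟨[], rfl, isTrace_nil _ _⟩
  | cons q L ih =>
    obtain ⟨hq, hL⟩ := List.forall_mem_cons.1 hL
    obtain ⟨hqL, hL'⟩ := List.isChain_cons.1 hL'
    set W := (L.map (syllableAction α β θ)).prod
    have hW := tendsto_almostAll_perm (l := l) W
    have hα_ne : ∀ᶠ x in almostAll l fun i => A i × B i × V i,
        L ≠ [] → α q.2 x.1 (W x.1 x.2).1 ≠ (W x.1 x.2).1 :=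
      eventually_imp_distrib_left.2 fun hL =>
        (tendsto_almostAll_prod_fst.comp hW).eventually <|
          hα.eventually_ne q.2 (hqL _ (List.head?_eq_some_head hL))
    have hβ_ne : ∀ᶠ x in almostAll l fun i => A i × B i × V i,
        β q.1 x.1 (W x.1 x.2).2.1 ≠ (W x.1 x.2).2.1 :=
      (tendsto_almostAll_prod_fst.comp (tendsto_almostAll_prod_snd.comp hW)).eventually <|
        hβ.eventually_ne q.1 hq
    filter_upwards [ih hL hL', hα_ne, hβ_ne] with x ⟨p, hpL, hp⟩ hα hβ
    refine ⟨_, ?_, hp.cons_cons (σ := α q.2 x.1) (τ := β q.1 x.1) (fun hp_ne => hα ?_) hβ⟩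
    · simp only [List.length_cons, hpL]
      ring
    · rintro rfl
      exact hp_ne (List.eq_nil_of_length_eq_zero hpL)

theorem eventually_alternating_ne (hα : IsSoficApprox l α) (hβ : IsSoficApprox l β)
    [∀ i, DecidableEq (A i × B i)] {θ : ∀ i, FreeGroup (A i × B i) →* V i}
    (hθ : ∀ n : ℕ, ∀ᶠ i in l, ∀ w, w ≠ 1 → w.norm ≤ n → θ i w ≠ 1)
    (g₀ : G) {L : List (H × G)} (hL_ne : L ≠ []) (hL : ∀ q ∈ L, q.1 ≠ 1)
    (hL' : L.IsChain fun q _ => q.2 ≠ 1) :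
    ∀ᶠ x in almostAll l fun i => A i × B i × V i,
      leftAction (A x.1) (B x.1 × V x.1) (α g₀ x.1)
        ((L.map (syllableAction α β θ)).prod x.1 x.2) ≠ x.2 := by
  filter_upwards [eventually_exists_isTrace hα hβ θ L hL hL',
    tendsto_fst_almostAll.eventually (hθ (2 * L.length))] with x ⟨p, hpL, hp⟩ hθx hx
  have hp_ne : p ≠ [] := List.ne_nil_of_length_pos <| by
    have hL_pos := List.length_pos_of_ne_nil hL_ne
    lia
  have hmk : FreeGroup.mk p ≠ 1 := fun h => hp_ne <| by
    rw [← hp.isReduced.reduce_eq, ← FreeGroup.toWord_mk, h, FreeGroup.toWord_one]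
  refine hθx (.mk p) hmk (FreeGroup.norm_mk_le.trans hpL.le) ?_
  have hv := hp.snd_snd_eq.symm.trans (congrArg (fun z => z.2.2) hx)
  exact mul_eq_right.1 hv

theorem IsSoficApprox.isSofic_coprod [l.NeBot] {A B V : I → Type} [∀ i, Finite (A i)]
    [∀ i, Finite (B i)] [∀ i, Finite (V i)] [∀ i, Nonempty (A i)] [∀ i, Nonempty (B i)]
    [∀ i, Group (V i)] [∀ i, DecidableEq (A i × B i)] {α : G → ∀ i, Equiv.Perm (A i)}
    {β : H → ∀ i, Equiv.Perm (B i)} (hα : IsSoficApprox l α) (hβ : IsSoficApprox l β)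
    {θ : ∀ i, FreeGroup (A i × B i) →* V i}
    (hθ : ∀ n : ℕ, ∀ᶠ i in l, ∀ w, w ≠ 1 → w.norm ≤ n → θ i w ≠ 1) :
    IsSofic (Monoid.Coprod G H) := by
  have hαL := hα.comp_leftAction (B := B) (V := V)
  have hβR := hβ.comp_twistedAction fun i => θ i ∘ .of
  refine isSofic_of_hom_hammingCon_quotient (Monoid.Coprod.lift hαL.toHom hβR.toHom)
    fun w hw => ?_
  obtain ⟨g₀, L, rfl, hL, hL'⟩ := exists_eq_inl_mul_prod_alternating w
  refine ⟨(fun i => leftAction (A i) (B i × V i) (α g₀ i)) *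
    (L.map (syllableAction α β θ)).prod, ?_, ?_⟩
  · rw [Con.coe_mul, ← Con.coe_mk', map_list_prod, map_mul, map_list_prod, List.map_map,
      List.map_map, Monoid.Coprod.lift_apply_inl]
    rfl
  · rcases eq_or_ne L [] with rfl | hL_ne
    · have hg₀ : g₀ ≠ 1 := by
        rintro rfl
        simp at hw
      exact hαL.eventually_ne g₀ hg₀
    · exact eventually_alternating_ne hα hβ hθ g₀ hL_ne hL hL'

end Coprod

theorem isSofic_coprod_of_locally_residuallyAmenable_general {G H : Type*} [Group G] [Group H]
    (hG : IsSofic G) (hH : IsSofic H) : IsSofic (Monoid.Coprod G H) := by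
  classical
  obtain ⟨I, l, _, A, _, _, α, hα⟩ := hG.exists_isSoficApprox
  obtain ⟨J, m, _, B, _, _, β, hβ⟩ := hH.exists_isSoficApprox
  choose V _ _ θ hθ using fun k : I × J × ℕ =>
    exists_finite_hom_ne_one_of_norm_le (A k.1 × B k.2.1) k.2.2
  have hfst : Filter.Tendsto (fun k : I × J × ℕ => k.1) (l ×ˢ m ×ˢ .atTop) l := Filter.tendsto_fst
  have hsnd : Filter.Tendsto (fun k : I × J × ℕ => k.2.1) (l ×ˢ m ×ˢ .atTop) m :=
    Filter.tendsto_fst.comp Filter.tendsto_snd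
  have hlen : Filter.Tendsto (fun k : I × J × ℕ => k.2.2) (l ×ˢ m ×ˢ .atTop) .atTop :=
    Filter.tendsto_snd.comp Filter.tendsto_snd
  refine (hα.reindex hfst).isSofic_coprod (hβ.reindex hsnd) (θ := θ) fun n => ?_
  filter_upwards [hlen.eventually_ge_atTop n] with k hk w hw hwn
  exact hθ k w hw (hwn.trans hk)

/-- The free product of two locally residually amenable groups is sofic. -/
theorem isSofic_coprod_of_locally_residuallyAmenable {G H : Type*} [Group G] [Group H]
    (hG : ∀ K : Subgroup G, K.FG → ResiduallyAmenable K)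
    (hH : ∀ K : Subgroup H, K.FG → ResiduallyAmenable K) :
    IsSofic (Monoid.Coprod G H) :=
  isSofic_coprod_of_locally_residuallyAmenable_general
    (isSofic_of_locally_residuallyAmenable hG) (isSofic_of_locally_residuallyAmenable hH)
end

section
/- Let K be a group generated by a symmetric set S (i.e., S = S⁻¹ and the subgroup generated by S is all of K). Let P be the group of finitary permutations of K (permutations of the set K that move only finitely many elements), and let Q be the subgroup of the symmetric group on the set K generated by P together with all left translations x ↦ gx for g ∈ K. Then Q is generated by the set W = S ∪ T_S, where the elements of S are viewed as the left translations x ↦ sx for s ∈ S, and T_S is the set of transpositions exchanging 1 and s for s ∈ S (and fixing all other elements of K). In particular, if S is finite then Q is finitely generated. -/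
/-- The group `Q` generated by the finitary permutations of a group `K` together with the left
translations: the subgroup of `Equiv.Perm K` generated by the permutations moving only finitely
many points and the maps `x ↦ g * x`. -/
def finitaryWithTranslations (K : Type*) [Group K] : Subgroup (Equiv.Perm K) :=
  Subgroup.closure
    ({σ : Equiv.Perm K | {x : K | σ x ≠ x}.Finite} ∪ Set.range fun g : K => Equiv.mulLeft g)

/-!
For a subgroup `H` of `Equiv.Perm α`, the relation `swap a b ∈ H` is an `H`-invariant equivalence
relation: transitivity comes from conjugating one transposition by another, invariance from
conjugating by elements of `H`. Hence, if `H` contains a set `T` of permutations and the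
transpositions `(a, τ a)` for `τ ∈ T`, then it contains `(a, σ a)` for every `σ` generated by `T`.
If `T` generates a transitive group, these are all the transpositions moving `a`, and they generate
the finitary permutations. For `K` acting on itself by left translations, `T` is `S` and `a = 1`.
-/

open Equiv MulAction

section Perm

variable {α : Type*}

/-- The group of finitary permutations of `α`, those moving only finitely many points. It is the
group `P` of the paper, for an arbitrary set in place of the group `K`. -/
def finitaryPerm (α : Type*) : Subgroup (Perm α) where
  carrier := {σ | {x | σ x ≠ x}.Finite}
  one_mem' := by simp
  mul_mem' {σ τ} hσ hτ := (hσ.union hτ).subset fun x hx => by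
    by_contra hfix
    simp only [Set.mem_union, Set.mem_ofPred, not_or, not_not] at hfix
    exact hx (by rw [Perm.mul_apply, hfix.2, hfix.1])
  inv_mem' {_} hσ := hσ.subset fun _ hx hfix => hx (Perm.inv_eq_iff_eq.2 hfix.symm)

variable [DecidableEq α] {H : Subgroup (Perm α)} {a b : α}

theorem finitaryPerm_eq_closure_isSwap :
    finitaryPerm α = Subgroup.closure {σ : Perm α | σ.IsSwap} :=
  Subgroup.ext fun _ => mem_closure_isSwap'.symm

theorem swap_mem_finitaryPerm (a b : α) : swap a b ∈ finitaryPerm α :=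
  finite_compl_fixedBy_swap

theorem finitaryPerm_le_iff_forall_swap_mem (a : α) :
    finitaryPerm α ≤ H ↔ ∀ b, swap a b ∈ H := by
  refine ⟨fun h b => h (swap_mem_finitaryPerm a b), fun h => ?_⟩
  rw [finitaryPerm_eq_closure_isSwap, Subgroup.closure_le]
  rintro _ ⟨b, c, -, rfl⟩
  exact SubmonoidClass.swap_mem_trans H (swap_comm a b ▸ h b) (h c)

theorem swap_apply_apply_mem {σ : Perm α} (hσ : σ ∈ H) (hab : swap a b ∈ H) :
    swap (σ a) (σ b) ∈ H := by
  rw [swap_apply_apply]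
  exact H.mul_mem (H.mul_mem hσ hab) (H.inv_mem hσ)

theorem swap_apply_mem_of_mem_closure {T : Set (Perm α)} (hTH : T ⊆ H)
    (hT : ∀ τ ∈ T, swap a (τ a) ∈ H) {σ : Perm α} (hσ : σ ∈ Subgroup.closure T) :
    swap a (σ a) ∈ H := by
  have hle : Subgroup.closure T ≤ H := (Subgroup.closure_le H).2 hTH
  induction hσ using Subgroup.closure_induction with
  | mem τ hτ => exact hT τ hτ
  | one => exact swap_self a ▸ H.one_mem
  | mul σ τ hσ _ haσ haτ =>
    exact SubmonoidClass.swap_mem_trans H haσ (swap_apply_apply_mem (hle hσ) haτ)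
  | inv σ hσ haσ =>
    have hinv : swap (σ⁻¹ a) a ∈ H := by
      simpa only [Perm.inv_def, symm_apply_apply] using
        swap_apply_apply_mem (H.inv_mem (hle hσ)) haσ
    exact swap_comm (σ⁻¹ a) a ▸ hinv

end Perm

section Action

variable {G α : Type*} [Group G] [MulAction G α]

theorem closure_image_toPerm {S : Set G} (hS : Subgroup.closure S = ⊤) :
    Subgroup.closure (toPerm '' S) = (toPermHom G α).range := by
  rw [MonoidHom.range_eq_map, ← hS, MonoidHom.map_closure]
  rfl

theorem closure_toPerm_union_swap_le [DecidableEq α] (S : Set G) (a : α) :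
    Subgroup.closure (toPerm '' S ∪ (fun s => swap a (s • a)) '' S) ≤
      finitaryPerm α ⊔ (toPermHom G α).range := by
  rw [Subgroup.closure_le, Set.union_subset_iff]
  constructor
  · rintro _ ⟨s, -, rfl⟩
    exact Subgroup.mem_sup_right ⟨s, rfl⟩
  · rintro _ ⟨s, -, rfl⟩
    exact Subgroup.mem_sup_left (swap_mem_finitaryPerm a (s • a))

theorem finitaryPerm_sup_range_toPermHom_le [IsPretransitive G α] [DecidableEq α] {S : Set G}
    (hS : Subgroup.closure S = ⊤) {a : α} {H : Subgroup (Perm α)}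
    (hSH : toPerm '' S ⊆ (H : Set (Perm α))) (hswap : ∀ s ∈ S, swap a (s • a) ∈ H) :
    finitaryPerm α ⊔ (toPermHom G α).range ≤ H := by
  rw [← closure_image_toPerm hS]
  refine sup_le ((finitaryPerm_le_iff_forall_swap_mem a).2 fun b => ?_)
    ((Subgroup.closure_le H).2 hSH)
  obtain ⟨g, rfl⟩ := exists_smul_eq G a b
  have hg : toPerm g ∈ Subgroup.closure (toPerm '' S : Set (Perm α)) := by
    rw [closure_image_toPerm hS]
    exact ⟨g, rfl⟩
  exact swap_apply_mem_of_mem_closure hSH (Set.forall_mem_image.2 hswap) hg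

theorem finitaryWithTranslations_eq_closure_general [IsPretransitive G α] [DecidableEq α]
    {S : Set G} (hS : Subgroup.closure S = ⊤) (a : α) :
    finitaryPerm α ⊔ (toPermHom G α).range =
      Subgroup.closure (toPerm '' S ∪ (fun s => swap a (s • a)) '' S) ∧
    (S.Finite → (finitaryPerm α ⊔ (toPermHom G α).range).FG) := by
  have hle : finitaryPerm α ⊔ (toPermHom G α).range ≤
      Subgroup.closure (toPerm '' S ∪ (fun s => swap a (s • a)) '' S) :=
    finitaryPerm_sup_range_toPermHom_le hS
      (Set.subset_union_left.trans Subgroup.subset_closure)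
      fun s hs => Subgroup.subset_closure (Or.inr ⟨s, hs, rfl⟩)
  have heq := hle.antisymm (closure_toPerm_union_swap_le S a)
  exact ⟨heq, fun hfin => (Subgroup.fg_iff _).2
    ⟨_, heq.symm, (hfin.image _).union (hfin.image _)⟩⟩

end Action

theorem finitaryWithTranslations_eq_sup (K : Type*) [Group K] :
    finitaryWithTranslations K = finitaryPerm K ⊔ (toPermHom K K).range := by
  have htrans : Set.range (fun g : K => Equiv.mulLeft g) = (toPermHom K K).range := by
    rw [MonoidHom.coe_range]
    rfl
  rw [finitaryWithTranslations, Subgroup.closure_union, htrans, Subgroup.closure_eq]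
  exact congrArg (· ⊔ _) (Subgroup.closure_eq (finitaryPerm K))

/-- Lemma: if `S` is a symmetric generating set of `K`, then `Q` (the group generated by the
finitary permutations and the left translations of `K`) is generated by
`W = S ∪ T_S`, where elements of `S` act as left translations and `T_S` consists of the
transpositions `(1, s)` for `s ∈ S`. In particular, if `S` is finite then `Q` is finitely
generated. -/
theorem finitaryWithTranslations_eq_closure {K : Type*} [Group K] [DecidableEq K]
    (S : Set K) (hSsymm : ∀ s ∈ S, s⁻¹ ∈ S) (hSgen : Subgroup.closure S = ⊤) :
    finitaryWithTranslations K =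
      Subgroup.closure
        ((fun s : K => Equiv.mulLeft s) '' S ∪ (fun s : K => Equiv.swap 1 s) '' S) ∧
    (S.Finite → (finitaryWithTranslations K).FG) := by
  simpa only [finitaryWithTranslations_eq_sup, smul_eq_mul, mul_one] using!
    finitaryWithTranslations_eq_closure_general hSgen (1 : K)
end

section
/- Let K be a finitely generated residually finite group, let P be the group of finitary permutations of the set K, and let Q be the subgroup of the symmetric group on the set K generated by P together with all left translations x ↦ gx for g ∈ K. Then Q is sofic. -/
/-!
Call `σ : K → K` a near translation by `g` if `σ x = g * x` for all but finitely many `x`. Every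
element of `Q` is a near translation, by a unique `g` when `K` is infinite. A residually finite
group is locally embeddable into finite groups, so there are maps `φ i` from `K` to finite groups
`H i` that are eventually multiplicative and injective on any given finite set. Each near
translation `σ` by `g` is then modelled on `H i`: follow `σ` on the image of its finite exceptional
set, and multiply by `φ i g` elsewhere. These models embed finite pieces of `Q` into the finite
monoids of self-maps of the `H i`, hence into their groups of units, and a group that is locally
embeddable into finite groups is sofic because finite groups act freely on themselves.
-/

open Filter

section EpsSimilar

variable {A : Type*} [Fintype A] {ε : ℝ} {e f : A → A}

lemma epsSimilar_of_forall_eq (hε : 0 ≤ ε) (heq : ∀ a, e a = f a) : EpsSimilar ε e f := by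
  simpa [EpsSimilar, heq] using mul_nonneg hε (Nat.cast_nonneg (Fintype.card A))

lemma not_epsSimilar_of_forall_ne [Nonempty A] (hε : ε < 1) (hne : ∀ a, e a ≠ f a) :
    ¬ EpsSimilar ε e f := by
  have hcard : (0 : ℝ) < Fintype.card A := mod_cast Fintype.card_pos
  rw [EpsSimilar, Nat.card_congr (Equiv.subtypeUnivEquiv hne), Nat.card_eq_fintype_card, not_le]
  exact mul_lt_of_lt_one_left hcard hε

end EpsSimilar

/-- A group is *locally embeddable into finite groups* (LEF) if every finite subset `D` admits a map
to a finite group that is injective on `D` and multiplicative on products of two elements of `D`. -/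
def IsLEF (G : Type*) [Group G] : Prop :=
  ∀ D : Finset G, ∃ (H : Type) (_ : Group H) (_ : Finite H) (φ : G → H),
    Set.InjOn φ D ∧ ∀ a ∈ D, ∀ b ∈ D, φ (a * b) = φ a * φ b

namespace IsLEF

variable {G : Type*} [Group G]

theorem isSofic (hG : IsLEF G) : IsSofic G := by
  classical
  intro F ε hε _
  obtain ⟨H, _, _, φ, hinj, hmul⟩ := hG (insert 1 F)
  have := Fintype.ofFinite H
  have hF {a : G} (ha : a ∈ F) : a ∈ insert 1 F := Finset.mem_insert_of_mem ha
  have h1 : (1 : G) ∈ insert 1 F := Finset.mem_insert_self 1 F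
  have hone : φ 1 = 1 := by simpa using hmul 1 h1 1 h1
  refine ⟨H, inferInstance, inferInstance, fun g a => a * φ g, fun e he f hf => ?_, ?_,
    fun e he hne => ?_⟩
  · exact epsSimilar_of_forall_eq hε.le fun a => by
      simp only [hmul e (hF he) f (hF hf), mul_assoc]
  · exact epsSimilar_of_forall_eq hε.le fun a => by simp only [hone, mul_one, id]
  · have hφe : φ e ≠ 1 := fun h => hne (hinj (hF he) h1 (h.trans hone.symm))
    exact not_epsSimilar_of_forall_ne (sub_lt_self 1 hε) fun a ha => hφe (mul_eq_left.1 ha)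

theorem of_forall_exists.{v}
    (h : ∀ D : Finset G, ∃ (H : Type v) (_ : Group H) (_ : Finite H) (φ : G → H),
      Set.InjOn φ D ∧ ∀ a ∈ D, ∀ b ∈ D, φ (a * b) = φ a * φ b) : IsLEF G := by
  intro D
  obtain ⟨H, _, _, φ, hinj, hmul⟩ := h D
  let toShrink : H ≃* Shrink.{0} H := Shrink.mulEquiv.symm
  refine ⟨Shrink.{0} H, inferInstance, Finite.of_equiv H toShrink.toEquiv,
    toShrink ∘ φ, toShrink.injective.comp_injOn hinj, fun a ha b hb => ?_⟩
  simp only [Function.comp_apply, hmul a ha b hb, map_mul]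

end IsLEF

/-- A family of maps from `G` that, along the filter `l`, eventually respects each single product
and eventually separates each single pair of points. When `l ≠ ⊥` and the targets are finite
groups, this is `IsLEF` without explicit finite sets. -/
structure IsAsymptoticEmbedding {G ι : Type*} [Mul G] {M : ι → Type*} [∀ i, Mul (M i)]
    (l : Filter ι) (φ : ∀ i, G → M i) : Prop where
  eventually_map_mul : ∀ a b, ∀ᶠ i in l, φ i (a * b) = φ i a * φ i b
  eventually_ne : ∀ a b, a ≠ b → ∀ᶠ i in l, φ i a ≠ φ i b

theorem IsLEF.exists_isAsymptoticEmbedding {G : Type*} [Group G] (hG : IsLEF G) :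
    ∃ (H : Finset G → Type) (_ : ∀ D, Group (H D)) (_ : ∀ D, Finite (H D)) (φ : ∀ D, G → H D),
      IsAsymptoticEmbedding atTop φ := by
  classical
  choose H _ _ φ hinj hmul using hG
  refine ⟨H, inferInstance, inferInstance, φ, fun a b => ?_, fun a b hab => ?_⟩ <;>
    filter_upwards [eventually_ge_atTop {a, b}] with D hD
  · exact hmul D a (hD (by simp)) b (hD (by simp))
  · exact (hinj D).ne (hD (by simp)) (hD (by simp)) hab

namespace IsAsymptoticEmbedding

variable {G ι : Type*} {l : Filter ι}

theorem eventually_injOn [Mul G] {M : ι → Type*} [∀ i, Mul (M i)] {φ : ∀ i, G → M i}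
    (hφ : IsAsymptoticEmbedding l φ) {s : Set G} (hs : s.Finite) :
    ∀ᶠ i in l, Set.InjOn (φ i) s := by
  have hpair (a b : G) : ∀ᶠ i in l, φ i a = φ i b → a = b := by
    by_cases hab : a = b
    · exact .of_forall fun _ _ => hab
    · exact (hφ.eventually_ne a b hab).mono fun _ hne heq => absurd heq hne
  simpa only [Set.InjOn, eventually_all_finite hs] using fun a _ b _ => hpair a b

theorem isLEF [Group G] {H : ι → Type*} [∀ i, Group (H i)] [∀ i, Finite (H i)] [l.NeBot]
    {φ : ∀ i, G → H i} (hφ : IsAsymptoticEmbedding l φ) : IsLEF G := by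
  refine .of_forall_exists fun D => ?_
  have hmul : ∀ᶠ i in l, ∀ a ∈ D, ∀ b ∈ D, φ i (a * b) = φ i a * φ i b := by
    simpa only [eventually_all_finset] using fun a _ b _ => hφ.eventually_map_mul a b
  obtain ⟨i, hi⟩ := ((hφ.eventually_injOn D.finite_toSet).and hmul).exists
  exact ⟨H i, inferInstance, inferInstance, φ i, hi⟩

section Monoid

variable [Group G] {M : ι → Type*} [∀ i, Monoid (M i)] {φ : ∀ i, G → M i}

theorem eventually_isUnit (hφ : IsAsymptoticEmbedding l φ) (hone : ∀ᶠ i in l, φ i 1 = 1)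
    (a : G) : ∀ᶠ i in l, IsUnit (φ i a) := by
  filter_upwards [hone, hφ.eventually_map_mul a a⁻¹, hφ.eventually_map_mul a⁻¹ a]
    with i h1 hright hleft
  rw [mul_inv_cancel, h1] at hright
  rw [inv_mul_cancel, h1] at hleft
  exact ⟨⟨φ i a, φ i a⁻¹, hright.symm, hleft.symm⟩, rfl⟩

theorem exists_units (hφ : IsAsymptoticEmbedding l φ) (hone : ∀ᶠ i in l, φ i 1 = 1) :
    ∃ u : ∀ i, G → (M i)ˣ, IsAsymptoticEmbedding l u := by
  have hlift (i : ι) (a : G) : ∃ u : (M i)ˣ, IsUnit (φ i a) → (u : M i) = φ i a := by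
    by_cases h : IsUnit (φ i a)
    · exact ⟨h.unit, fun _ => rfl⟩
    · exact ⟨1, fun h' => absurd h' h⟩
  choose u hu using hlift
  have hval (a : G) : ∀ᶠ i in l, (u i a : M i) = φ i a :=
    (hφ.eventually_isUnit hone a).mono fun i => hu i a
  refine ⟨u, fun a b => ?_, fun a b hab => ?_⟩
  · filter_upwards [hval a, hval b, hval (a * b), hφ.eventually_map_mul a b] with i ha hb hab hmul
    exact Units.ext (by rw [hab, hmul, Units.val_mul, ha, hb])
  · filter_upwards [hval a, hval b, hφ.eventually_ne a b hab] with i ha hb hne heq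
    exact hne (by rw [← ha, ← hb, heq])

end Monoid

end IsAsymptoticEmbedding

theorem IsLEF.of_residuallyFinite {G : Type*} [Group G] [Group.ResiduallyFinite G] : IsLEF G := by
  have : Nonempty (FiniteIndexNormalSubgroup G) := ⟨.ofSubgroup ⊤⟩
  have hmk : IsAsymptoticEmbedding atBot
      fun (N : FiniteIndexNormalSubgroup G) (g : G) => (g : G ⧸ N.toSubgroup) := by
    refine ⟨fun a b => .of_forall fun N => rfl, fun a b hab => ?_⟩
    obtain ⟨N, hN⟩ := Group.exists_finiteIndexNormalSubgroup_of_residuallyFinite a b hab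
    filter_upwards [eventually_le_atBot N] with N' hle heq
    exact hN (QuotientGroup.eq.2 (hle (QuotientGroup.eq.1 heq)))
  exact hmk.isLEF

/-- `σ` agrees with the left translation by `g` at all but finitely many points. -/
def IsNearTranslation {K : Type*} [Mul K] (σ : K → K) (g : K) : Prop :=
  σ =ᶠ[cofinite] (g * ·)

namespace IsNearTranslation

variable {K : Type*} {σ τ : K → K} {g g' : K}

protected lemma id [MulOneClass K] : IsNearTranslation (id : K → K) 1 :=
  .of_forall fun x => (one_mul x).symm

lemma comp [Semigroup K] [IsLeftCancelMul K] (hσ : IsNearTranslation σ g)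
    (hτ : IsNearTranslation τ g') : IsNearTranslation (σ ∘ τ) (g * g') := by
  filter_upwards [hτ, (mul_right_injective g').tendsto_cofinite.eventually hσ] with x hτx hσx
  rw [Function.comp_apply, hτx, hσx, mul_assoc]

lemma inv [Group K] {σ : Equiv.Perm K} (hσ : IsNearTranslation σ g) :
    IsNearTranslation (σ⁻¹ : Equiv.Perm K) g⁻¹ := by
  filter_upwards [(σ⁻¹).injective.tendsto_cofinite.eventually hσ] with x hx
  rw [eq_inv_mul_iff_mul_eq, ← hx, Equiv.Perm.inv_def, Equiv.apply_symm_apply]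

lemma unique [Mul K] [IsRightCancelMul K] [Infinite K] (hg : IsNearTranslation σ g)
    (hg' : IsNearTranslation σ g') : g = g' := by
  obtain ⟨x, hx, hx'⟩ := (hg.and hg').exists
  exact mul_right_cancel (hx.symm.trans hx')

lemma exists_of_mem_finitaryWithTranslations [Group K] {q : Equiv.Perm K}
    (hq : q ∈ finitaryWithTranslations K) : ∃ g, IsNearTranslation q g := by
  induction hq using Subgroup.closure_induction with
  | mem q hq =>
    rcases hq with hfinitary | ⟨g, rfl⟩
    · exact ⟨1, by simpa [IsNearTranslation, EventuallyEq, eventually_cofinite] using hfinitary⟩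
    · exact ⟨g, .of_forall fun _ => rfl⟩
  | one => exact ⟨1, .id⟩
  | mul e f _ _ he hf =>
    obtain ⟨g, hg⟩ := he
    obtain ⟨g', hg'⟩ := hf
    exact ⟨g * g', hg.comp hg'⟩
  | inv e _ he =>
    obtain ⟨g, hg⟩ := he
    exact ⟨g⁻¹, hg.inv⟩

end IsNearTranslation

/-- The self-map of `H` that models a near translation `σ` of `K` by `g` along `φ : K → H`: it sends
`φ x` to `φ (σ x)` for `x` in the exceptional set of `σ`, and is the translation by `φ g` outside
the image of this set. It is meaningful only when `φ` is injective on the exceptional set. -/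
noncomputable def nearTranslationModel {K H : Type*} [Mul K] [Mul H] (φ : K → H) (g : K)
    (σ : K → K) : H → H :=
  Function.extend (fun x : {x // σ x ≠ g * x} => φ x) (fun x => φ (σ x)) (φ g * ·)

section nearTranslationModel

variable {K H : Type*} {g g' : K} {σ τ : K → K} {φ : K → H} {h : H}

lemma nearTranslationModel_apply_of_forall_ne [Mul K] [Mul H]
    (hh : ∀ x, σ x ≠ g * x → φ x ≠ h) : nearTranslationModel φ g σ h = φ g * h :=
  Function.extend_apply' _ _ _ fun ⟨x, hx⟩ => hh x x.2 hx

lemma nearTranslationModel_comp_apply_of_forall_ne [Group K] [Group H]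
    (hgg' : φ (g * g') = φ g * φ g')
    (hmul : ∀ x, σ (g' * x) ≠ g * (g' * x) → φ (g' * x) = φ g' * φ x)
    (hτh : ∀ x, τ x ≠ g' * x → φ x ≠ h) (hσh : ∀ x, σ (g' * x) ≠ g * (g' * x) → φ x ≠ h) :
    nearTranslationModel φ (g * g') (σ ∘ τ) h =
      nearTranslationModel φ g σ (nearTranslationModel φ g' τ h) := by
  have hστh (x : K) (hx : (σ ∘ τ) x ≠ g * g' * x) : φ x ≠ h := by
    by_cases hτx : τ x = g' * x
    · exact hσh x (by rwa [Function.comp_apply, hτx, mul_assoc] at hx)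
    · exact hτh x hτx
  have hσh' (y : K) (hy : σ y ≠ g * y) : φ y ≠ φ g' * h := by
    obtain ⟨x, rfl⟩ := (Group.mulLeft_bijective g').surjective y
    rw [hmul x hy]
    exact (mul_right_injective (φ g')).ne (hσh x hy)
  rw [nearTranslationModel_apply_of_forall_ne hστh, nearTranslationModel_apply_of_forall_ne hτh,
    nearTranslationModel_apply_of_forall_ne hσh', hgg', mul_assoc]

end nearTranslationModel

namespace IsAsymptoticEmbedding

variable {K ι : Type*} {l : Filter ι} {H : ι → Type*} {φ : ∀ i, K → H i} {σ τ : K → K} {g g' : K}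

section Mul

variable [Mul K] [∀ i, Mul (H i)]

lemma eventually_nearTranslationModel_apply (hφ : IsAsymptoticEmbedding l φ)
    (hσ : IsNearTranslation σ g) (x : K) :
    ∀ᶠ i in l, nearTranslationModel (φ i) g σ (φ i x) = φ i (σ x) := by
  have hfin : {y | σ y ≠ g * y}.Finite := hσ
  filter_upwards [hφ.eventually_injOn (hfin.insert x), hφ.eventually_map_mul g x] with i hinj hmul
  by_cases hx : σ x = g * x
  · rw [nearTranslationModel_apply_of_forall_ne, hx, hmul]
    intro y hy hyx
    obtain rfl : y = x := hinj (.inr hy) (.inl rfl) hyx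
    exact hy hx
  · have hinj' : Function.Injective fun y : {y // σ y ≠ g * y} => φ i y :=
      fun y z hyz => Subtype.ext (hinj (.inr y.2) (.inr z.2) hyz)
    exact hinj'.extend_apply _ _ ⟨x, hx⟩

lemma eventually_nearTranslationModel_ne (hφ : IsAsymptoticEmbedding l φ)
    (hσ : IsNearTranslation σ g) (hτ : IsNearTranslation τ g') (hne : σ ≠ τ) :
    ∀ᶠ i in l, nearTranslationModel (φ i) g σ ≠ nearTranslationModel (φ i) g' τ := by
  obtain ⟨x, hx⟩ := Function.ne_iff.1 hne
  filter_upwards [hφ.eventually_nearTranslationModel_apply hσ x,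
    hφ.eventually_nearTranslationModel_apply hτ x, hφ.eventually_ne _ _ hx] with i hσx hτx hφx heq
  exact hφx (by rw [← hσx, ← hτx, heq])

end Mul

variable [Group K] [∀ i, Group (H i)]

lemma eventually_nearTranslationModel_one_id (hφ : IsAsymptoticEmbedding l φ) :
    ∀ᶠ i in l, nearTranslationModel (φ i) 1 id = id := by
  filter_upwards [hφ.eventually_map_mul 1 1] with i hmul
  have hone : φ i 1 = 1 := by simpa using hmul
  funext h
  have hexceptional (x : K) (hx : id x ≠ 1 * x) : φ i x ≠ h := absurd (one_mul x).symm hx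
  rw [nearTranslationModel_apply_of_forall_ne hexceptional, hone, one_mul, id]

lemma eventually_nearTranslationModel_comp_apply (hφ : IsAsymptoticEmbedding l φ)
    (hσ : IsNearTranslation σ g) (hτ : IsNearTranslation τ g') (x : K) :
    ∀ᶠ i in l, nearTranslationModel (φ i) (g * g') (σ ∘ τ) (φ i x) =
      nearTranslationModel (φ i) g σ (nearTranslationModel (φ i) g' τ (φ i x)) := by
  filter_upwards [hφ.eventually_nearTranslationModel_apply (hσ.comp hτ) x,
    hφ.eventually_nearTranslationModel_apply hσ (τ x),
    hφ.eventually_nearTranslationModel_apply hτ x] with i hστx hσ_τx hτx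
  rw [hστx, hτx, hσ_τx, Function.comp_apply]

lemma eventually_nearTranslationModel_comp (hφ : IsAsymptoticEmbedding l φ)
    (hσ : IsNearTranslation σ g) (hτ : IsNearTranslation τ g') :
    ∀ᶠ i in l, nearTranslationModel (φ i) (g * g') (σ ∘ τ) =
      nearTranslationModel (φ i) g σ ∘ nearTranslationModel (φ i) g' τ := by
  -- Away from `S`, first `τ` and then `σ` act as translations.
  let S : Set K := {x | τ x ≠ g' * x} ∪ {x | σ (g' * x) ≠ g * (g' * x)}
  have hS : S.Finite :=
    Set.Finite.union hτ (Set.Finite.preimage (mul_right_injective g').injOn hσ)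
  filter_upwards [hφ.eventually_map_mul g g',
    (eventually_all_finite hS).2 fun x _ => hφ.eventually_map_mul g' x,
    (eventually_all_finite hS).2 fun x _ => hφ.eventually_nearTranslationModel_comp_apply hσ hτ x]
    with i hgg' hmul hcomp
  funext h
  by_cases hh : ∃ x ∈ S, φ i x = h
  · obtain ⟨x, hx, rfl⟩ := hh
    exact hcomp x hx
  · exact nearTranslationModel_comp_apply_of_forall_ne hgg' (fun x hx => hmul x (.inr hx))
      (fun x hx hxh => hh ⟨x, .inl hx, hxh⟩) (fun x hx hxh => hh ⟨x, .inr hx, hxh⟩)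

end IsAsymptoticEmbedding

theorem isLEF_finitaryWithTranslations {K : Type*} [Group K] (hK : IsLEF K) :
    IsLEF (finitaryWithTranslations K) := by
  rcases finite_or_infinite K with _ | _
  · exact .of_residuallyFinite
  obtain ⟨H, _, _, φ, hφ⟩ := hK.exists_isAsymptoticEmbedding
  choose g hg using fun q : finitaryWithTranslations K =>
    IsNearTranslation.exists_of_mem_finitaryWithTranslations q.2
  have hg_one : g 1 = 1 := (hg 1).unique .id
  have hg_mul (e f) : g (e * f) = g e * g f := (hg (e * f)).unique ((hg e).comp (hg f))
  have hmodel : IsAsymptoticEmbedding (M := fun D => Function.End (H D)) atTop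
      fun D q => nearTranslationModel (φ D) (g q) q.1 :=
    { eventually_map_mul e f := by
        rw [hg_mul]
        exact hφ.eventually_nearTranslationModel_comp (hg e) (hg f)
      eventually_ne e f hef := hφ.eventually_nearTranslationModel_ne (hg e) (hg f)
        fun h => hef (Subtype.ext (DFunLike.coe_injective h)) }
  have hfinite (D) : Finite (Function.End (H D)) := inferInstanceAs (Finite (H D → H D))
  obtain ⟨u, hu⟩ := hmodel.exists_units <| by
    rw [hg_one]
    exact hφ.eventually_nearTranslationModel_one_id
  exact hu.isLEF

theorem isSofic_finitaryWithTranslations_general {K : Type*} [Group K] (hK : IsLEF K) :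
    IsSofic (finitaryWithTranslations K) :=
  (isLEF_finitaryWithTranslations hK).isSofic

/-- Lemma: if `K` is a finitely generated residually finite group, then the group `Q` generated
by the finitary permutations of `K` together with the left translations by elements of `K` is
sofic. -/
theorem isSofic_finitaryWithTranslations {K : Type*} [Group K] (hfg : Group.FG K)
    (hrf : ∀ g : K, g ≠ 1 → ∃ (H : Type) (_ : Group H) (_ : Finite H) (φ : K →* H), φ g ≠ 1) :
    IsSofic (finitaryWithTranslations K) :=
  have := Group.residuallyFinite_of_forall_exists_finite_monoidHom hrf
  isSofic_finitaryWithTranslations_general .of_residuallyFinite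
end
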